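/- Let Λ and Λ̂ be positive bounded self-adjoint operators on a Hilbert space and λ > 0. If ‖(Λ̂ − Λ)(Λ + λI)^{-1}‖ ≤ 1/2, then ‖(Λ + λI)(Λ̂ + λI)^{-1}‖ ≤ 2 and, for all l ∈ [0,1], ‖(Λ + λI)^l (Λ̂ + λI)^{-l}‖ ≤ 2^l. -/

import Mathlib

open scoped NNReal

section CordesInequality

variable {A : Type*} [CStarAlgebra A] [PartialOrder A] [StarOrderedRing A]

/-- Nonnegative scalars factor out of nonnegative real powers in the continuous functional calculus. -/
lemma CFC.smul_rpow {a : A} (ha : 0 ≤ a) (r : ℝ≥0) {l : ℝ} (hl : 0 ≤ l) :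
    (r • a) ^ l = r ^ l • a ^ l := by
  have hcont : Continuous fun x : ℝ≥0 => x ^ l := NNReal.continuous_rpow_const hl
  rw [CFC.rpow_def, CFC.rpow_def, ← cfc_comp_smul r _ a hcont.continuousOn ha,
    ← cfc_smul _ _ a hcont.continuousOn]
  simp only [smul_eq_mul, NNReal.mul_rpow]

/-- The Cordes inequality for contractive products. -/
lemma CFC.norm_rpow_mul_rpow_le_one {a b : A} (ha : 0 ≤ a) (hb : IsStrictlyPositive b)
    (hab : ‖a * b‖ ≤ 1) {l : ℝ} (hl : l ∈ Set.Icc 0 1) : ‖a ^ l * b ^ l‖ ≤ 1 := by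
  obtain ⟨hl₀, hl₁⟩ := hl
  have hsqrt (p : ℝ) (hp : 0 ≤ p) : CFC.sqrt ((a ^ (2 : ℝ)) ^ p) = a ^ p := by
    rw [CFC.sqrt_eq_rpow, CFC.rpow_rpow_of_exponent_nonneg _ _ _ hp (by norm_num),
      CFC.rpow_rpow_of_exponent_nonneg _ _ _ (by norm_num) (by positivity)]
    congr 1
    ring
  have hinv (p : ℝ) (hp : 0 ≤ p) : ((b ^ (-2 : ℝ)) ^ p) ^ (-(1 / 2) : ℝ) = b ^ p := by
    rcases hp.eq_or_lt with rfl | hp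
    · rw [CFC.rpow_zero _ CFC.rpow_nonneg, CFC.one_rpow, CFC.rpow_zero _ hb.nonneg]
    · rw [CFC.rpow_rpow b _ _ (by norm_num),
        CFC.rpow_rpow b _ _ (mul_ne_zero (by norm_num) hp.ne')]
      congr 1
      ring
  have hle (p : ℝ) (hp : 0 ≤ p) :
      (a ^ (2 : ℝ)) ^ p ≤ (b ^ (-2 : ℝ)) ^ p ↔ ‖a ^ p * b ^ p‖ ≤ 1 := by
    rw [le_iff_norm_sqrt_mul_rpow _ _ CFC.rpow_nonneg
      ((hb.rpow _ _).rpow _ _), hsqrt p hp, hinv p hp]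
  rw [← hle l hl₀]
  refine CFC.rpow_le_rpow ⟨hl₀, hl₁⟩ ?_
  have h := (hle 1 zero_le_one).2
    (by rwa [CFC.rpow_one a ha, CFC.rpow_one b hb.nonneg])
  rwa [CFC.rpow_one _ CFC.rpow_nonneg, CFC.rpow_one _ CFC.rpow_nonneg] at h

/-- The **Cordes inequality**: a bound `c` on `‖a * b‖` gives the bound `c ^ l` on
`‖a ^ l * b ^ l‖` for `l ∈ [0, 1]`. -/
lemma CFC.norm_rpow_mul_rpow_le {a b : A} (ha : 0 ≤ a) (hb : IsStrictlyPositive b) {c : ℝ≥0}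
    (hc : 0 < c) (hab : ‖a * b‖ ≤ c) {l : ℝ} (hl : l ∈ Set.Icc 0 1) :
    ‖a ^ l * b ^ l‖ ≤ (c : ℝ) ^ l := by
  have hca : 0 ≤ c⁻¹ • a := smul_nonneg zero_le ha
  have h : ‖(c⁻¹ • a) * b‖ ≤ 1 := by
    rw [smul_mul_assoc, NNReal.smul_def, norm_smul, Real.norm_of_nonneg (by positivity),
      NNReal.coe_inv, inv_mul_le_iff₀ (by exact_mod_cast hc), mul_one]
    exact hab
  have h' := CFC.norm_rpow_mul_rpow_le_one hca hb h hl
  rw [CFC.smul_rpow ha _ hl.1, smul_mul_assoc, NNReal.smul_def, norm_smul,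
    Real.norm_of_nonneg (by positivity), NNReal.inv_rpow, NNReal.coe_inv, NNReal.coe_rpow,
    inv_mul_le_iff₀ (Real.rpow_pos_of_pos (by exact_mod_cast hc) l), mul_one] at h'
  exact h'

end CordesInequality

/-- If `x * (1 + e) = 1` with `‖e‖ ≤ 1 / 2`, then `‖x‖ ≤ 2`. -/
lemma norm_le_two_of_mul_one_add_eq_one {A : Type*} [NormedRing A] (h₁ : ‖(1 : A)‖ ≤ 1) {x e : A}
    (hx : x * (1 + e) = 1) (he : ‖e‖ ≤ 1 / 2) : ‖x‖ ≤ 2 := by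
  have hxe : x = 1 - x * e := by rw [← hx]; noncomm_ring
  have h : ‖x‖ ≤ ‖(1 : A)‖ + ‖x * e‖ := by
    conv_lhs => rw [hxe]
    exact norm_sub_le _ _
  have h' : ‖x * e‖ ≤ ‖x‖ * (1 / 2) :=
    (norm_mul_le _ _).trans (mul_le_mul_of_nonneg_left he (norm_nonneg x))
  linarith

/-- If `Λ, Λ̂` are positive bounded self-adjoint operators, `λ > 0`,
`R = (Λ+λI)⁻¹`, `R̂ = (Λ̂+λI)⁻¹`, and `‖(Λ̂ − Λ)(Λ + λI)⁻¹‖ ≤ 1/2`, then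
`‖(Λ + λI)(Λ̂ + λI)⁻¹‖ ≤ 2` and, for all `l ∈ [0,1]`,
`‖(Λ + λI)^l (Λ̂ + λI)^{-l}‖ ≤ 2^l` (powers via continuous functional calculus). -/
theorem stmt_9 {H : Type*} [NormedAddCommGroup H] [InnerProductSpace ℂ H] [CompleteSpace H]
    [TopologicalSpace.SeparableSpace H]
    (Λ Λh R Rh : H →L[ℂ] H) (lam : ℝ) (hlam : 0 < lam)
    (hΛ : Λ.IsPositive) (hΛh : Λh.IsPositive)
    (hR1 : (Λ + (lam : ℂ) • 1) * R = 1) (hR2 : R * (Λ + (lam : ℂ) • 1) = 1)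
    (hRh1 : (Λh + (lam : ℂ) • 1) * Rh = 1) (hRh2 : Rh * (Λh + (lam : ℂ) • 1) = 1)
    (hsmall : ‖(Λh - Λ) * R‖ ≤ 1 / 2) :
    ‖(Λ + (lam : ℂ) • 1) * Rh‖ ≤ 2 ∧
      ∀ l : ℝ, 0 ≤ l → l ≤ 1 →
        ‖cfc (fun x : ℝ => x ^ l) (Λ + (lam : ℂ) • 1) * cfc (fun x : ℝ => x ^ l) Rh‖
          ≤ 2 ^ l := by
  have hpos {T : H →L[ℂ] H} (hT : T.IsPositive) : 0 ≤ T + (lam : ℂ) • 1 := by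
    refine add_nonneg ((ContinuousLinearMap.nonneg_iff_isPositive T).2 hT) ?_
    rw [Complex.coe_smul]
    exact smul_nonneg hlam.le zero_le_one
  have hbound : ‖(Λ + (lam : ℂ) • 1) * Rh‖ ≤ 2 := by
    refine norm_le_two_of_mul_one_add_eq_one ContinuousLinearMap.norm_id_le ?_ hsmall
    have hE : 1 + (Λh - Λ) * R = (Λh + (lam : ℂ) • 1) * R := by
      rw [show Λh + (lam : ℂ) • 1 = Λ + (lam : ℂ) • 1 + (Λh - Λ) by abel, add_mul _ _ R, hR1]
    rw [hE, mul_assoc, ← mul_assoc Rh, hRh2, one_mul, hR1]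
  have hRh : IsStrictlyPositive Rh := by
    let u : (H →L[ℂ] H)ˣ := ⟨Λh + (lam : ℂ) • 1, Rh, hRh1, hRh2⟩
    have hu : IsStrictlyPositive (u : H →L[ℂ] H) := u.isStrictlyPositive_iff.2 (hpos hΛh)
    have hinv := hu.ringInverse
    rwa [Ring.inverse_unit] at hinv
  refine ⟨hbound, fun l hl₀ hl₁ => ?_⟩
  rw [← CFC.rpow_eq_cfc_real (hpos hΛ), ← CFC.rpow_eq_cfc_real hRh.nonneg]
  exact CFC.norm_rpow_mul_rpow_le (c := 2) (hpos hΛ) hRh two_pos hbound ⟨hl₀, hl₁⟩
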